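/- (Belief update on receiver memory.) Fix memory update rules l¹_{1:T} and a deterministic encoding strategy for encoder 1, and define μ¹_t(m) := P(M¹_{t-1} = m | Z¹_{1:t-1} = z_{1:t-1}) for any realization z_{1:t-1} of positive probability. Then for t = 3,…,T, μ¹_t(m) = Σ_{m' ∈ ℳ¹} Σ_{y ∈ 𝒴¹: l¹_{t-1}(m', y) = m} Q_{t-1}(y | z_{t-1})·μ¹_{t-1}(m'), and for t = 2, μ¹_2(m) = Σ_{y ∈ 𝒴¹: l¹_1(y) = m} Q_1(y | z_1), where Q_t(y | z) := P(h¹_t(z, N¹_t) = y). In particular μ¹_t is a deterministic function β¹_t of (μ¹_{t-1}, Z¹_{t-1}) not depending on the other conditioning variables. -/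

import Mathlib

/-!
Given `Z_{0:t-1} = z_{0:t-1}`, the memory after `t` symbols is a function of the noises
`N_{0:t-1}` alone, obtained by feeding the channel the fixed symbols `z`. Since the noises are
independent of the source, conditioning on the symbols just replaces `Z` by `z`: the belief is
the unconditional law `memLaw` of the memory driven by the fixed symbols (`muCh_eq_memLaw`).
In particular conditioning additionally on `z_{t-1}` does not change the law of the previous
memory. The noise `N_{t-1}` is independent of the memory it updates
(`sum_noise_mul_of_indep_coord`), so `memLaw` is a Markov chain with transition matrix
`memKernel` (`memLaw_succ`), which is the claimed recursion.
-/

open Finset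

namespace MTC

noncomputable section

/-- Probability of an event `E` under the weight function `p` on a finite sample space. -/
def Pr {Ω : Type*} [Fintype Ω] (p : Ω → ℝ) (E : Set Ω) : ℝ :=
  ∑ ω, E.indicator p ω

/-- Conditional probability `P(E ∣ F)`. -/
def cPr {Ω : Type*} [Fintype Ω] (p : Ω → ℝ) (E F : Set Ω) : ℝ :=
  Pr p (E ∩ F) / Pr p F

/-- Extension of a trajectory `x : Fin T → X` to all of `ℕ` (junk after time `T-1`). -/
def pad {X : Type*} [Inhabited X] {T : ℕ} (x : Fin T → X) (n : ℕ) : X :=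
  if h : n < T then x ⟨n, h⟩ else default

/-- The receiver-memory process: `Mseq l y t` is the memory content `M_{t-1}` of the
paper (after the symbols `y_0, …, y_{t-1}` have been processed), with the convention
`M_0 := default` (the paper's `M_0 := 0`). -/
def Mseq {Y M : Type*} [Inhabited M] (l : ℕ → M → Y → M) (y : ℕ → Y) : ℕ → M
  | 0 => default
  | t + 1 => l t (Mseq l y t) (y t)

variable {S Z1 N1 Y1 M1 : Type*}

/-- Joint law of the source `S` and the channel noises: the noises `N¹_{0:T-1}` are
independent random variables (with marginals `q t`), independent of the source. -/
def chanP [Fintype S] (T : ℕ) (pS : S → ℝ) (q : ℕ → N1 → ℝ) :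
    S × (Fin T → N1) → ℝ :=
  fun ω => pS ω.1 * ∏ t : Fin T, q t.val (ω.2 t)

/-- The channel output `Y¹_t = h¹_t(Z¹_t, N¹_t)`, where the transmitted symbol
`Z¹_t = ζ_t(s)` is a deterministic function of the source realization. -/
def Ych [Inhabited N1] (T : ℕ) (h1 : ℕ → Z1 → N1 → Y1) (ζ : ℕ → S → Z1)
    (ω : S × (Fin T → N1)) : ℕ → Y1 :=
  fun t => h1 t (ζ t ω.1) (pad ω.2 t)

/-- Encoder 1's belief on the receiver memory:
`μ¹_t(m) = P(M¹_{t-1} = m ∣ Z¹_{0:t-1} = zs_{0:t-1})`. -/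
def muCh [Fintype S] [Fintype N1] [Inhabited N1] [Inhabited M1] (T : ℕ)
    (pS : S → ℝ) (q : ℕ → N1 → ℝ) (h1 : ℕ → Z1 → N1 → Y1)
    (l1 : ℕ → M1 → Y1 → M1) (ζ : ℕ → S → Z1) (t : ℕ) (zs : ℕ → Z1) : M1 → ℝ :=
  fun m =>
    cPr (chanP T pS q) {ω : S × (Fin T → N1) | Mseq l1 (Ych T h1 ζ ω) t = m}
      {ω | ∀ s < t, ζ s ω.1 = zs s}

/-- The channel transition probability `Q_t(y ∣ z) = P(h¹_t(z, N¹_t) = y)`. -/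
def Qch [Fintype N1] [DecidableEq Y1] (q : ℕ → N1 → ℝ) (h1 : ℕ → Z1 → N1 → Y1)
    (t : ℕ) (z : Z1) (y : Y1) : ℝ :=
  ∑ n, if h1 t z n = y then q t n else 0

/-- One-step transition probability of the memory, from `m'` to `m`, when the symbol `z` is
sent at time `t`. -/
def memKernel [Fintype N1] [Fintype Y1] [DecidableEq Y1] [DecidableEq M1]
    (q : ℕ → N1 → ℝ) (h1 : ℕ → Z1 → N1 → Y1) (l1 : ℕ → M1 → Y1 → M1)
    (t : ℕ) (z : Z1) (m' m : M1) : ℝ :=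
  ∑ y, if l1 t m' y = m then Qch q h1 t z y else 0

lemma memKernel_eq [Fintype N1] [Fintype Y1] [DecidableEq Y1] [DecidableEq M1]
    (q : ℕ → N1 → ℝ) (h1 : ℕ → Z1 → N1 → Y1) (l1 : ℕ → M1 → Y1 → M1)
    (t : ℕ) (z : Z1) (m' m : M1) :
    memKernel q h1 l1 t z m' m =
      ∑ a, q t a * (if l1 t m' (h1 t z a) = m then 1 else 0) := by
  have h : ∀ y, (if l1 t m' y = m then Qch q h1 t z y else 0) =
      ∑ a, if h1 t z a = y then (if l1 t m' y = m then q t a else 0) else 0 := by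
    intro y
    by_cases hy : l1 t m' y = m <;> simp [hy, Qch]
  unfold memKernel
  simp_rw [h]
  rw [Finset.sum_comm]
  simp

/-- The memory after `t` symbols when the fixed symbols `zs` are sent and the noise
realization is `n`. -/
def memOf [Inhabited N1] [Inhabited M1] {T : ℕ} (h1 : ℕ → Z1 → N1 → Y1)
    (l1 : ℕ → M1 → Y1 → M1) (zs : ℕ → Z1) (n : Fin T → N1) (t : ℕ) : M1 :=
  Mseq l1 (fun s => h1 s (zs s) (pad n s)) t

/-- The law, under independent noises with marginals `q`, of the memory after `t` symbols when
the fixed symbols `zs` are sent. -/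
def memLaw [Fintype N1] [Inhabited N1] [Inhabited M1] [DecidableEq M1] (T : ℕ)
    (q : ℕ → N1 → ℝ) (h1 : ℕ → Z1 → N1 → Y1) (l1 : ℕ → M1 → Y1 → M1)
    (zs : ℕ → Z1) (t : ℕ) (m : M1) : ℝ :=
  ∑ n : Fin T → N1, (∏ i, q i.val (n i)) * (if memOf h1 l1 zs n t = m then 1 else 0)

lemma Mseq_congr {Y M : Type*} [Inhabited M] (l : ℕ → M → Y → M) {y y' : ℕ → Y} {t : ℕ}
    (h : ∀ s < t, y s = y' s) : Mseq l y t = Mseq l y' t := by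
  induction t with
  | zero => rfl
  | succ t ih =>
    simp only [Mseq]
    rw [ih fun s hs => h s (hs.trans t.lt_succ_self), h t t.lt_succ_self]

lemma sum_noise_eq_one [Fintype N1] {T : ℕ} {q : ℕ → N1 → ℝ} (hq : ∀ t, ∑ n, q t n = 1) :
    ∑ n : Fin T → N1, ∏ i, q i.val (n i) = 1 := by
  rw [← Fintype.prod_sum fun (i : Fin T) (a : N1) => q i.val a]
  simp [hq]

/-- Independence of the `i`-th noise from a function `f` of the other ones: the expectation of
the product factors. -/
lemma sum_noise_mul_of_indep_coord [Fintype N1] [Inhabited N1] {T : ℕ} {q : ℕ → N1 → ℝ}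
    (hq : ∀ t, ∑ n, q t n = 1) (i : Fin T) (f : (Fin T → N1) → ℝ) (g : N1 → ℝ)
    (hf : ∀ n n', (∀ j ≠ i, n j = n' j) → f n = f n') :
    ∑ n : Fin T → N1, (∏ j, q j.val (n j)) * (f n * g (n i)) =
      (∑ n : Fin T → N1, (∏ j, q j.val (n j)) * f n) * ∑ a, q i.val a * g a := by
  obtain _ | k := T
  · exact i.elim0
  -- The general factorization, which yields the right-hand side as well by taking `g = 1`.
  have key : ∀ g : N1 → ℝ, ∑ n : Fin (k + 1) → N1, (∏ j, q j.val (n j)) * (f n * g (n i)) =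
      (∑ a, q i.val a * g a) *
        ∑ r : Fin k → N1, (∏ j, q (i.succAbove j).val (r j)) * f (i.insertNth default r) := by
    intro g
    rw [← (Fin.insertNthEquiv (fun _ => N1) i).sum_comp, Fintype.sum_prod_type,
      Finset.sum_mul_sum]
    refine Finset.sum_congr rfl fun a _ => Finset.sum_congr rfl fun r _ => ?_
    have hfr : f (i.insertNth a r) = f (i.insertNth default r) := by
      apply hf
      intro j hj
      obtain ⟨j, rfl⟩ := Fin.exists_succAbove_eq hj
      simp
    have he : Fin.insertNthEquiv (fun _ => N1) i (a, r) = i.insertNth a r := rfl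
    rw [he, hfr]
    simp only [Fin.prod_univ_succAbove _ i, Fin.insertNth_apply_same,
      Fin.insertNth_apply_succAbove]
    ring
  have k1 := key fun _ => 1
  simp only [mul_one, hq, one_mul] at k1
  rw [key g, k1, mul_comm]

lemma memLaw_succ [Fintype N1] [Fintype Y1] [Fintype M1] [Inhabited N1] [Inhabited M1]
    [DecidableEq Y1] [DecidableEq M1] {T : ℕ} {q : ℕ → N1 → ℝ}
    (hq : ∀ t, ∑ n, q t n = 1) (h1 : ℕ → Z1 → N1 → Y1) (l1 : ℕ → M1 → Y1 → M1)
    (zs : ℕ → Z1) {t : ℕ} (ht : t < T) (m : M1) :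
    memLaw T q h1 l1 zs (t + 1) m =
      ∑ m', memKernel q h1 l1 t (zs t) m' m * memLaw T q h1 l1 zs t m' := by
  have hstep : ∀ n : Fin T → N1,
      (if memOf h1 l1 zs n (t + 1) = m then (1 : ℝ) else 0) =
        ∑ m', (if memOf h1 l1 zs n t = m' then (1 : ℝ) else 0) *
          (if l1 t m' (h1 t (zs t) (n ⟨t, ht⟩)) = m then 1 else 0) := by
    intro n
    have hM : memOf h1 l1 zs n (t + 1) =
        l1 t (memOf h1 l1 zs n t) (h1 t (zs t) (n ⟨t, ht⟩)) := by
      simp only [memOf, Mseq, pad, ht, dite_true]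
    simp only [hM, ite_mul, one_mul, zero_mul, Finset.sum_ite_eq, Finset.mem_univ, if_true]
  calc memLaw T q h1 l1 zs (t + 1) m
      = ∑ m', ∑ n : Fin T → N1, (∏ i, q i.val (n i)) *
          ((if memOf h1 l1 zs n t = m' then (1 : ℝ) else 0) *
            (if l1 t m' (h1 t (zs t) (n ⟨t, ht⟩)) = m then 1 else 0)) := by
        unfold memLaw
        simp_rw [hstep, Finset.mul_sum]
        exact Finset.sum_comm
    _ = _ := by
        refine Finset.sum_congr rfl fun m' _ => ?_
        rw [sum_noise_mul_of_indep_coord hq ⟨t, ht⟩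
          (fun n => if memOf h1 l1 zs n t = m' then 1 else 0)
          (fun a => if l1 t m' (h1 t (zs t) a) = m then 1 else 0), memKernel_eq, mul_comm]
        · rfl
        · intro n n' hn
          have : memOf h1 l1 zs n t = memOf h1 l1 zs n' t := by
            refine Mseq_congr _ fun s hs => ?_
            have hsT : s < T := hs.trans ht
            simp only [pad, hsT, dite_true]
            rw [hn ⟨s, hsT⟩ (by simpa [Fin.ext_iff] using hs.ne)]
          simp only [this]

/-- Conditioning on the transmitted symbols amounts to substituting them, because the noises
are independent of the source. -/
lemma muCh_eq_memLaw [Fintype S] [Fintype N1] [Inhabited N1] [Inhabited M1] [DecidableEq M1]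
    {T : ℕ} {pS : S → ℝ} {q : ℕ → N1 → ℝ} (hq : ∀ t, ∑ n, q t n = 1)
    (h1 : ℕ → Z1 → N1 → Y1) (l1 : ℕ → M1 → Y1 → M1) (ζ : ℕ → S → Z1) {t : ℕ} {zs : ℕ → Z1}
    (hpos : 0 < Pr (chanP T pS q) {ω : S × (Fin T → N1) | ∀ s < t, ζ s ω.1 = zs s}) :
    muCh T pS q h1 l1 ζ t zs = memLaw T q h1 l1 zs t := by
  classical
  funext m
  unfold muCh cPr
  rw [div_eq_iff hpos.ne']
  have hF : Pr (chanP T pS q) {ω : S × (Fin T → N1) | ∀ s < t, ζ s ω.1 = zs s} =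
      ∑ x, if ∀ s < t, ζ s x = zs s then pS x else 0 := by
    unfold Pr
    rw [Fintype.sum_prod_type]
    refine Finset.sum_congr rfl fun x _ => ?_
    by_cases hx : ∀ s < t, ζ s x = zs s
    · simp only [Set.indicator, Set.mem_ofPred_eq, if_pos hx, chanP]
      rw [← Finset.mul_sum, sum_noise_eq_one hq, mul_one]
    · simp only [Set.indicator, Set.mem_ofPred_eq, if_neg hx, Finset.sum_const_zero]
  rw [hF, mul_comm, Finset.sum_mul]
  unfold Pr
  rw [Fintype.sum_prod_type]
  refine Finset.sum_congr rfl fun x _ => ?_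
  by_cases hx : ∀ s < t, ζ s x = zs s
  · rw [if_pos hx, memLaw, Finset.mul_sum]
    refine Finset.sum_congr rfl fun n _ => ?_
    have hm : Mseq l1 (Ych T h1 ζ (x, n)) t = memOf h1 l1 zs n t :=
      Mseq_congr _ fun s hs => by simp only [Ych, hx s hs]
    by_cases hmm : memOf h1 l1 zs n t = m
    · rw [Set.indicator_of_mem, if_pos hmm, mul_one]
      · rfl
      · exact ⟨hm.trans hmm, hx⟩
    · rw [Set.indicator_of_notMem (fun h => hmm (hm.symm.trans h.1)), if_neg hmm, mul_zero,
        mul_zero]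
  · rw [if_neg hx, zero_mul]
    exact Finset.sum_eq_zero fun n _ => Set.indicator_of_notMem (fun h => hx h.2) _

lemma Pr_mono {Ω : Type*} [Fintype Ω] {p : Ω → ℝ} (hp : ∀ ω, 0 ≤ p ω) {E F : Set Ω}
    (h : E ⊆ F) : Pr p E ≤ Pr p F :=
  Finset.sum_le_sum fun ω _ => Set.indicator_le_indicator_of_subset h hp ω

/-- **Lemma 2 of the paper (belief update on the receiver memory).** For fixed memory
update rules `l1` and a deterministic encoding strategy of encoder 1,
`μ¹_t` satisfies `μ¹_2(m) = ∑_{y : l¹_1(y) = m} Q_1(y ∣ z_1)` and, for `t ≥ 3`,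
`μ¹_t(m) = ∑_{m'} ∑_{y : l¹_{t-1}(m', y) = m} Q_{t-1}(y ∣ z_{t-1}) μ¹_{t-1}(m')`
(here stated with 0-indexed time: paper time `t` is index `t-1`); in particular `μ¹_t`
is a deterministic function `β` of `(μ¹_{t-1}, Z¹_{t-1})`. -/
theorem belief_on_memory_update
    [Fintype S] [Fintype N1] [Fintype Y1] [Fintype M1]
    [Inhabited N1] [Inhabited M1] [DecidableEq Y1] [DecidableEq M1]
    (T : ℕ)
    (pS : S → ℝ) (q : ℕ → N1 → ℝ)
    (hpS : (∀ s, 0 ≤ pS s) ∧ ∑ s, pS s = 1)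
    (hq : ∀ t, (∀ n, 0 ≤ q t n) ∧ ∑ n, q t n = 1)
    (h1 : ℕ → Z1 → N1 → Y1) (l1 : ℕ → M1 → Y1 → M1) (ζ : ℕ → S → Z1) :
    -- base case (paper's `t = 2`, i.e. index 1): `μ¹_2(m) = ∑_{y : l¹_1(y) = m} Q_1(y ∣ z_1)`
    (1 < T → ∀ zs : ℕ → Z1,
      0 < Pr (chanP T pS q) {ω : S × (Fin T → N1) | ∀ s < 1, ζ s ω.1 = zs s} →
      ∀ m, muCh T pS q h1 l1 ζ 1 zs m =
        ∑ y, if l1 0 default y = m then Qch q h1 0 (zs 0) y else 0) ∧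
    -- recursion (paper's `t = 3, …, T`, i.e. indices `2 ≤ t < T`)
    (∀ t, 2 ≤ t → t < T → ∀ zs : ℕ → Z1,
      0 < Pr (chanP T pS q) {ω : S × (Fin T → N1) | ∀ s < t, ζ s ω.1 = zs s} →
      ∀ m, muCh T pS q h1 l1 ζ t zs m =
        ∑ m', (∑ y, if l1 (t - 1) m' y = m then Qch q h1 (t - 1) (zs (t - 1)) y else 0) *
          muCh T pS q h1 l1 ζ (t - 1) zs m') ∧
    -- in particular, `μ¹_t = β_t (μ¹_{t-1}, Z¹_{t-1})`
    (∃ β : ℕ → (M1 → ℝ) → Z1 → (M1 → ℝ),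
      ∀ t, 1 ≤ t → t < T → ∀ zs : ℕ → Z1,
        0 < Pr (chanP T pS q) {ω : S × (Fin T → N1) | ∀ s < t, ζ s ω.1 = zs s} →
        muCh T pS q h1 l1 ζ t zs =
          β t (muCh T pS q h1 l1 ζ (t - 1) zs) (zs (t - 1))) := by
  have hq1 : ∀ t, ∑ n, q t n = 1 := fun t => (hq t).2
  have hchan : ∀ ω, 0 ≤ chanP T pS q ω := fun ω =>
    mul_nonneg (hpS.1 _) (Finset.prod_nonneg fun i _ => (hq i.val).1 _)
  have hrec : ∀ t, t + 1 < T → ∀ zs : ℕ → Z1,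
      0 < Pr (chanP T pS q) {ω : S × (Fin T → N1) | ∀ s < t + 1, ζ s ω.1 = zs s} →
      ∀ m, muCh T pS q h1 l1 ζ (t + 1) zs m =
        ∑ m', memKernel q h1 l1 t (zs t) m' m * muCh T pS q h1 l1 ζ t zs m' := by
    intro t ht zs hpos m
    have hpos' : 0 < Pr (chanP T pS q) {ω : S × (Fin T → N1) | ∀ s < t, ζ s ω.1 = zs s} :=
      hpos.trans_le (Pr_mono hchan fun ω hω s hs => hω s (hs.trans t.lt_succ_self))
    rw [muCh_eq_memLaw hq1 h1 l1 ζ hpos, muCh_eq_memLaw hq1 h1 l1 ζ hpos',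
      memLaw_succ hq1 h1 l1 zs (t.lt_succ_self.trans ht)]
  refine ⟨?_, ?_, ?_⟩
  · intro hT zs hpos m
    -- The initial memory is deterministic, so its law is a point mass at `default`.
    have h0 : ∀ m', memLaw T q h1 l1 zs 0 m' = if default = m' then 1 else 0 := by
      intro m'
      have hM : ∀ n : Fin T → N1, memOf h1 l1 zs n 0 = default := fun _ => rfl
      simp only [memLaw, hM]
      rw [← Finset.sum_mul, sum_noise_eq_one hq1, one_mul]
    have hs := memLaw_succ hq1 h1 l1 zs (zero_lt_one.trans hT) m
    simp only [h0, mul_ite, mul_one, mul_zero, Finset.sum_ite_eq, Finset.mem_univ,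
      if_true] at hs
    rw [muCh_eq_memLaw hq1 h1 l1 ζ hpos]
    exact hs
  · intro t ht htT zs hpos m
    obtain ⟨t, rfl⟩ : ∃ k, t = k + 1 := ⟨t - 1, by omega⟩
    exact hrec t htT zs hpos m
  · refine ⟨fun t μ z m => ∑ m', memKernel q h1 l1 (t - 1) z m' m * μ m', ?_⟩
    intro t ht htT zs hpos
    obtain ⟨t, rfl⟩ : ∃ k, t = k + 1 := ⟨t - 1, by omega⟩
    exact funext (hrec t htT zs hpos)

end

end MTC
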